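/- Under the stated hypotheses on the graph G (λ_1 = m, λ nonincreasing, μ nondecreasing, and Condition (4.1)), the height of the edge ideal I_G in S equals min{ min_{1≤j≤n} (λ_j − μ_j + j − 1), n }. -/

import Mathlib

open MvPolynomial

/-- The height of an ideal: the infimum of the heights of the prime ideals
containing it. -/
noncomputable def idealHeight {A : Type*} [CommRing A] (I : Ideal A) : ℕ∞ :=
  sInf (Order.height '' {p : PrimeSpectrum A | I ≤ p.asIdeal})

/-!
A prime contains the edge ideal exactly when the variables in it form a vertex cover, and `k`
variables generate a prime of height `k`, so the height of the edge ideal is the least size of a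
vertex cover. In a staircase graph either a cover contains all vertices `< n`, or it misses a first
vertex `i < n`; in the latter case it contains every vertex `< i` and all neighbours
`mu i, …, lam i - 1` of `i`. By monotonicity of `lam` and `mu`, either of these sets of vertices is
already a cover.
-/

/-- A vertex cover of the graph (loops allowed) with edge relation `E`. `SimpleGraph.IsVertexCover`
does not apply, as it excludes loops. -/
def IsVertexCover {σ : Type*} (E : σ → σ → Prop) (c : Set σ) : Prop :=
  ∀ ⦃i j⦄, E i j → i ∈ c ∨ j ∈ c

theorem isVertexCover_of_le {σ : Type*} [LinearOrder σ] {E : σ → σ → Prop}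
    (hsymm : ∀ i j, E i j → E j i) {c : Set σ} (h : ∀ i j, i ≤ j → E i j → i ∈ c ∨ j ∈ c) :
    IsVertexCover E c := fun i j hij ↦
  (le_total i j).elim (h i j · hij) fun hji ↦ (h j i hji (hsymm i j hij)).symm

/-- The edge ideal of the graph with edge relation `E`, with coefficients in `R`. -/
noncomputable def edgeIdeal {σ : Type*} (R : Type*) [CommRing R] (E : σ → σ → Prop) :
    Ideal (MvPolynomial σ R) :=
  Ideal.span {p | ∃ i j, E i j ∧ p = X i * X j}

theorem idealHeight_eq_height {A : Type*} [CommRing A] (I : Ideal A) :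
    idealHeight I = I.height := by
  apply le_antisymm
  · rw [Ideal.height_eq_inf_minimalPrimes]
    refine le_iInf₂ fun P hP ↦ sInf_le ⟨⟨P, hP.1.1⟩, hP.1.2, ?_⟩
    rw [← PrimeSpectrum.height_eq_orderHeight]
  · refine le_sInf ?_
    rintro _ ⟨P, hP, rfl⟩
    rw [← PrimeSpectrum.height_eq_orderHeight]
    exact Ideal.height_mono hP

section VariableIdeals

variable {σ R : Type*} [CommRing R]

theorem X_mem_span_X_image_iff [Nontrivial R] {s : Set σ} {i : σ} :
    (X i : MvPolynomial σ R) ∈ Ideal.span (X '' s) ↔ i ∈ s := by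
  classical simp [mem_ideal_span_X_image, support_X, Finsupp.single_apply]

theorem map_mem_span_X_image_iff {S : Type*} [CommRing S] {φ : R →+* S}
    (hφ : Function.Injective φ) {s : Set σ} {f : MvPolynomial σ R} :
    map φ f ∈ Ideal.span (X '' s) ↔ f ∈ Ideal.span (X '' s) := by
  rw [mem_ideal_span_X_image, mem_ideal_span_X_image, support_map_of_injective f hφ]

open Classical in
/-- The `R`-algebra endomorphism of the polynomial ring that sets the variables in `s` to zero. -/
noncomputable def killVars (R : Type*) [CommRing R] (s : Set σ) :
    MvPolynomial σ R →ₐ[R] MvPolynomial σ R :=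
  aeval fun i ↦ if i ∈ s then 0 else X i

theorem ker_killVars (s : Set σ) : RingHom.ker (killVars R s) = Ideal.span (X '' s) := by
  set I : Ideal (MvPolynomial σ R) := Ideal.span (X '' s)
  apply le_antisymm
  · have mk_comp_killVars : (Ideal.Quotient.mkₐ R I).comp (killVars R s) =
        Ideal.Quotient.mkₐ R I := by
      ext i
      by_cases hi : i ∈ s
      · have hX : (X i : MvPolynomial σ R) ∈ I := Ideal.subset_span ⟨i, hi, rfl⟩
        simp [killVars, hi, Ideal.Quotient.eq_zero_iff_mem.mpr hX]
      · simp [killVars, hi]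
    intro f hf
    have h := DFunLike.congr_fun mk_comp_killVars f
    rw [AlgHom.comp_apply, RingHom.mem_ker.mp hf, map_zero] at h
    exact Ideal.Quotient.eq_zero_iff_mem.mp h.symm
  · rw [Ideal.span_le]
    rintro _ ⟨i, hi, rfl⟩
    simp [killVars, hi]

theorem isPrime_span_X_image [IsDomain R] (s : Set σ) :
    (Ideal.span (X '' s : Set (MvPolynomial σ R))).IsPrime :=
  ker_killVars (R := R) s ▸ RingHom.ker_isPrime _

theorem card_le_height_span_X_image [IsDomain R] (s : Finset σ) :
    (s.card : ℕ∞) ≤ (Ideal.span (X '' s : Set (MvPolynomial σ R))).height := by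
  classical
  induction s using Finset.induction_on with
  | empty => simp
  | insert a s ha ih =>
    have := isPrime_span_X_image (R := R) (s : Set σ)
    have := isPrime_span_X_image (R := R) ((insert a s : Finset σ) : Set σ)
    have hlt : Ideal.span (X '' s : Set (MvPolynomial σ R)) <
        Ideal.span (X '' ((insert a s : Finset σ) : Set σ)) := by
      refine lt_of_le_of_ne (Ideal.span_mono (Set.image_mono (by simp))) fun heq ↦ ha ?_
      rw [← Finset.mem_coe, ← X_mem_span_X_image_iff (R := R), heq, X_mem_span_X_image_iff]
      simp
    rw [Finset.card_insert_of_notMem ha, Nat.cast_succ]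
    exact (add_le_add_left ih 1).trans (Ideal.height_add_one_le_of_lt_of_isPrime hlt)

variable [Finite σ]

theorem height_span_X_image_le_of_isNoetherianRing [Nontrivial R] [IsNoetherianRing R]
    (s : Finset σ) :
    (Ideal.span (X '' s : Set (MvPolynomial σ R))).height ≤ s.card := by
  have hne : Ideal.span (X '' s : Set (MvPolynomial σ R)) ≠ ⊤ := by
    rw [Ideal.ne_top_iff_one, mem_ideal_span_X_image]
    simp
  have hrank : (Ideal.span (X '' s : Set (MvPolynomial σ R))).spanFinrank ≤ s.card :=
    calc
      _ ≤ (X '' s : Set (MvPolynomial σ R)).ncard :=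
        Submodule.spanFinrank_span_le_ncard_of_finite (s.finite_toSet.image X)
      _ ≤ (s : Set σ).ncard := Set.ncard_image_le s.finite_toSet
      _ = s.card := Set.ncard_coe_finset s
  exact (Ideal.height_le_spanFinrank _ hne).trans (Nat.cast_le.mpr hrank)

theorem height_span_X_image_le [IsDomain R] (s : Finset σ) :
    (Ideal.span (X '' s : Set (MvPolynomial σ R))).height ≤ s.card := by
  -- Inverting the nonzero constants reduces to polynomials over a field, a Noetherian ring.
  let : Algebra (MvPolynomial σ R) (MvPolynomial σ (FractionRing R)) := algebraMvPolynomial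
  have hunder : (Ideal.span (X '' s : Set (MvPolynomial σ (FractionRing R)))).under
      (MvPolynomial σ R) = Ideal.span (X '' (s : Set σ)) := by
    ext f
    exact map_mem_span_X_image_iff (IsFractionRing.injective R (FractionRing R))
  rw [← hunder, IsLocalization.height_under ((nonZeroDivisors R).map C)]
  exact height_span_X_image_le_of_isNoetherianRing s

theorem height_span_X_image [IsDomain R] (s : Finset σ) :
    (Ideal.span (X '' s : Set (MvPolynomial σ R))).height = s.card :=
  (height_span_X_image_le s).antisymm (card_le_height_span_X_image s)

end VariableIdeals

section EdgeIdeal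

variable {σ R : Type*} [CommRing R] {E : σ → σ → Prop}

theorem edgeIdeal_le_iff_isVertexCover {P : Ideal (MvPolynomial σ R)} [P.IsPrime] :
    edgeIdeal R E ≤ P ↔ IsVertexCover E {i | X i ∈ P} := by
  rw [edgeIdeal, Ideal.span_le]
  constructor
  · exact fun h i j hij ↦ Ideal.IsPrime.mem_or_mem ‹_› (h ⟨i, j, hij, rfl⟩)
  · rintro h _ ⟨i, j, hij, rfl⟩
    exact (h hij).elim (P.mul_mem_right _) (P.mul_mem_left _)

theorem height_edgeIdeal [IsDomain R] [Finite σ] :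
    (edgeIdeal R E).height =
      ⨅ (c : Finset σ) (_ : IsVertexCover E (c : Set σ)), (c.card : ℕ∞) := by
  apply le_antisymm
  · refine le_iInf₂ fun c hc ↦ ?_
    have := isPrime_span_X_image (R := R) (c : Set σ)
    rw [← height_span_X_image (R := R) c]
    apply Ideal.height_mono
    simpa only [edgeIdeal_le_iff_isVertexCover, X_mem_span_X_image_iff, Set.ofPred_mem_eq] using hc
  · rw [Ideal.height_eq_inf_minimalPrimes]
    refine le_iInf₂ fun P hP ↦ ?_
    have := hP.1.1
    let c : Finset σ := (Set.toFinite {i | X i ∈ P}).toFinset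
    have hc : IsVertexCover E (c : Set σ) := by
      simpa only [c, Set.Finite.coe_toFinset] using edgeIdeal_le_iff_isVertexCover.mp hP.1.2
    have hcP : Ideal.span (X '' c : Set (MvPolynomial σ R)) ≤ P := by
      rw [Ideal.span_le]
      rintro _ ⟨i, hi, rfl⟩
      simpa [c] using hi
    calc
      _ ≤ (c.card : ℕ∞) := iInf₂_le c hc
      _ ≤ P.height := (card_le_height_span_X_image c).trans (Ideal.height_mono hcP)

end EdgeIdeal

/-- A graph on `{0, …, m - 1}` whose upper triangular adjacency region is bounded by two monotone
functions: a vertex `i < n` is joined to those `j ≥ i` with `mu i ≤ j < lam i`, and there are no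
edges among the vertices `≥ n`. Vertices are counted from `0`, so `lam i` and `mu i` are the
`λ_{i+1}` and `μ_{i+1}` of 1-based notation. -/
structure IsStaircaseGraph {m n : ℕ} (E : Fin m → Fin m → Prop) (lam mu : Fin n → ℕ) : Prop where
  symm : ∀ i j, E i j → E j i
  adj_iff : ∀ i j : Fin m, i ≤ j →
    (E i j ↔ ∃ h : i.val < n, mu ⟨i, h⟩ ≤ j.val ∧ j.val < lam ⟨i, h⟩)
  n_le : n ≤ m
  le_mu : ∀ i, i.val ≤ mu i
  lam_le : ∀ i, lam i ≤ m
  lam_anti : Antitone lam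
  mu_mono : Monotone mu

namespace IsStaircaseGraph

variable {m n : ℕ} {E : Fin m → Fin m → Prop} {lam mu : Fin n → ℕ}

/-- The vertex cover `{0, …, n - 1}` of a staircase graph. -/
def initialCover (hE : IsStaircaseGraph E lam mu) : Finset (Fin m) :=
  (Finset.range n).attachFin fun _ hv ↦ (Finset.mem_range.mp hv).trans_le hE.n_le

/-- The vertex cover of a staircase graph that consists of the vertices before `i` and the
neighbours of `i` from `i` on. -/
def cornerCover (hE : IsStaircaseGraph E lam mu) (i : Fin n) : Finset (Fin m) :=
  (Finset.range i ∪ Finset.Ico (mu i) (lam i)).attachFin fun v hv ↦ by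
    have := hE.lam_le i
    have := hE.n_le
    simp only [Finset.mem_union, Finset.mem_range, Finset.mem_Ico] at hv
    omega

variable (hE : IsStaircaseGraph E lam mu)
include hE

theorem mem_initialCover {v : Fin m} : v ∈ hE.initialCover ↔ v.val < n := by
  simp [initialCover]

theorem mem_cornerCover {i : Fin n} {v : Fin m} :
    v ∈ hE.cornerCover i ↔ v.val < i.val ∨ mu i ≤ v.val ∧ v.val < lam i := by
  simp [cornerCover]

theorem card_initialCover : hE.initialCover.card = n := by
  simp [initialCover]

theorem card_cornerCover (i : Fin n) : (hE.cornerCover i).card = lam i - mu i + i := by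
  have hdisj : Disjoint (Finset.range i) (Finset.Ico (mu i) (lam i)) := by
    have := hE.le_mu i
    simp only [Finset.disjoint_left, Finset.mem_range, Finset.mem_Ico]
    omega
  rw [cornerCover, Finset.card_attachFin, Finset.card_union_of_disjoint hdisj, Finset.card_range,
    Nat.card_Ico, add_comm]

theorem isVertexCover_initialCover : IsVertexCover E (hE.initialCover : Set (Fin m)) := by
  refine isVertexCover_of_le hE.symm fun a b hab hadj ↦ Or.inl ?_
  obtain ⟨ha, -⟩ := (hE.adj_iff a b hab).mp hadj
  exact hE.mem_initialCover.mpr ha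

theorem isVertexCover_cornerCover (i : Fin n) :
    IsVertexCover E (hE.cornerCover i : Set (Fin m)) := by
  refine isVertexCover_of_le hE.symm fun a b hab hadj ↦ ?_
  obtain ⟨ha, hmu, hlam⟩ := (hE.adj_iff a b hab).mp hadj
  rcases lt_or_ge a.val i.val with hai | hia
  · exact Or.inl (hE.mem_cornerCover.mpr (Or.inl hai))
  · have hi : i ≤ ⟨a, ha⟩ := hia
    exact Or.inr (hE.mem_cornerCover.mpr
      (Or.inr ⟨(hE.mu_mono hi).trans hmu, hlam.trans_le (hE.lam_anti hi)⟩))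

theorem initialCover_subset_or_exists_cornerCover_subset {c : Finset (Fin m)}
    (hc : IsVertexCover E (c : Set (Fin m))) :
    hE.initialCover ⊆ c ∨ ∃ i, hE.cornerCover i ⊆ c := by
  refine or_iff_not_imp_left.mpr fun hsub ↦ ?_
  obtain ⟨v, hv, hvc⟩ := Finset.not_subset.mp hsub
  obtain ⟨i, hic, hmin⟩ := wellFounded_lt.has_min {i : Fin n | Fin.castLE hE.n_le i ∉ c}
    ⟨⟨v, hE.mem_initialCover.mp hv⟩, hvc⟩
  refine ⟨i, fun w hw ↦ ?_⟩
  rcases hE.mem_cornerCover.mp hw with hwi | hrow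
  · by_contra hwc
    exact hmin ⟨w, hwi.trans i.isLt⟩ hwc hwi
  · have hiw : Fin.castLE hE.n_le i ≤ w := (hE.le_mu i).trans hrow.1
    exact (hc ((hE.adj_iff _ w hiw).mpr ⟨i.isLt, hrow⟩)).resolve_left hic

theorem iInf_card_isVertexCover (hn : 1 ≤ n) :
    ⨅ (c : Finset (Fin m)) (_ : IsVertexCover E (c : Set (Fin m))), (c.card : ℕ∞) =
      (min (sInf {h : ℕ | ∃ i : Fin n, h = lam i - mu i + i.val}) n : ℕ) := by
  apply le_antisymm
  · obtain ⟨i, hi⟩ := Nat.sInf_mem (s := {h : ℕ | ∃ i : Fin n, h = lam i - mu i + i.val})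
      ⟨_, ⟨0, hn⟩, rfl⟩
    rcases min_choice (sInf {h : ℕ | ∃ i : Fin n, h = lam i - mu i + i.val}) n with hmin | hmin
    · rw [hmin, hi, ← hE.card_cornerCover]
      exact iInf₂_le (hE.cornerCover i) (hE.isVertexCover_cornerCover i)
    · rw [hmin]
      conv_rhs => rw [← hE.card_initialCover]
      exact iInf₂_le hE.initialCover hE.isVertexCover_initialCover
  · refine le_iInf₂ fun c hc ↦ Nat.cast_le.mpr ?_
    rcases hE.initialCover_subset_or_exists_cornerCover_subset hc with hsub | ⟨i, hsub⟩
    · exact (min_le_right _ _).trans (hE.card_initialCover ▸ Finset.card_le_card hsub)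
    · have hcorner : lam i - mu i + i.val ∈ {h : ℕ | ∃ i : Fin n, h = lam i - mu i + i.val} :=
        ⟨i, rfl⟩
      calc
        _ ≤ lam i - mu i + i.val := (min_le_left _ _).trans (Nat.sInf_le hcorner)
        _ = (hE.cornerCover i).card := (hE.card_cornerCover i).symm
        _ ≤ c.card := Finset.card_le_card hsub

end IsStaircaseGraph

theorem isStaircaseGraph_of_extremal_neighbors {m n : ℕ} {E : Fin m → Fin m → Prop}
    (hsymm : ∀ i j, E i j → E j i) (hnm : n ≤ m)
    (hn_max : ∀ i j : Fin m, n ≤ i.val → i.val ≤ j.val → ¬ E i j)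
    {lam mu : Fin n → ℕ}
    (hlam_mem : ∀ i : Fin n, ∃ j : Fin m, j.val + 1 = lam i ∧ E (Fin.castLE hnm i) j)
    (hlam_max : ∀ (i : Fin n) (j : Fin m), E (Fin.castLE hnm i) j → j.val < lam i)
    (hmu_mem : ∀ i : Fin n, ∃ j : Fin m, j.val = mu i ∧ i.val ≤ j.val ∧ E (Fin.castLE hnm i) j)
    (hmu_min : ∀ (i : Fin n) (j : Fin m), i.val ≤ j.val → E (Fin.castLE hnm i) j → mu i ≤ j.val)
    (hlam_anti : Antitone lam) (hmu_mono : Monotone mu)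
    (hcond : ∀ (i : Fin n) (j : Fin m), mu i ≤ j.val → j.val < lam i → E (Fin.castLE hnm i) j) :
    IsStaircaseGraph E lam mu where
  symm := hsymm
  adj_iff i j hij := by
    refine ⟨fun hadj ↦ ?_, fun ⟨h, hmu, hlam⟩ ↦ hcond ⟨i, h⟩ j hmu hlam⟩
    have h : i.val < n := lt_of_not_ge fun hni ↦ hn_max i j hni hij hadj
    exact ⟨h, hmu_min ⟨i, h⟩ j hij hadj, hlam_max ⟨i, h⟩ j hadj⟩
  n_le := hnm
  le_mu i := by
    obtain ⟨j, hj, hij, -⟩ := hmu_mem i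
    exact hj ▸ hij
  lam_le i := by
    obtain ⟨j, hj, -⟩ := hlam_mem i
    exact hj ▸ j.isLt
  lam_anti := hlam_anti
  mu_mono := hmu_mono

theorem edge_ideal_height_general {R : Type*} [CommRing R] [IsDomain R] {m n : ℕ} (hn : 1 ≤ n)
    {E : Fin m → Fin m → Prop} {lam mu : Fin n → ℕ} (hE : IsStaircaseGraph E lam mu) :
    idealHeight (edgeIdeal R E) =
      (min (sInf {h : ℕ | ∃ i : Fin n, h = lam i - mu i + i.val}) n : ℕ) := by
  rw [idealHeight_eq_height, height_edgeIdeal, hE.iInf_card_isVertexCover hn]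

/-- Under the hypotheses of Proposition 4.2 (graph `E` on
`{1,…,m}`, symmetric, loops allowed, no isolated vertex; `n`, `λ`, `μ` as in
the text; `λ_1 = m`, `λ` nonincreasing, `μ` nondecreasing, Condition (4.1)),
the height of the edge ideal `I_G ⊆ S = K[x_1,…,x_m]` equals
`min{ min_{1≤j≤n} (λ_j − μ_j + j − 1), n }`.
Vertices are `Fin m` (1-based label `v.val + 1`); `i : Fin n` has 1-based label
`i.val + 1`, so the quantity `λ_j − μ_j + j − 1` reads `lam i - mu i + i.val`. -/
theorem edge_ideal_height
    (K : Type*) [Field K] (m : ℕ) (hm : 1 ≤ m)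
    (E : Fin m → Fin m → Prop)
    (hsymm : ∀ i j, E i j → E j i)
    (hcover : ∀ i, ∃ j, E i j)
    (n : ℕ) (hn : 1 ≤ n) (hnm : n ≤ m)
    (hn_mem : ∃ j : Fin m, n - 1 ≤ j.val ∧ E ⟨n - 1, by omega⟩ j)
    (hn_max : ∀ i j : Fin m, n ≤ i.val → i.val ≤ j.val → ¬ E i j)
    (lam mu : Fin n → ℕ)
    (hlam_mem : ∀ i : Fin n, ∃ j : Fin m, j.val + 1 = lam i ∧ E (Fin.castLE hnm i) j)
    (hlam_max : ∀ (i : Fin n) (j : Fin m), E (Fin.castLE hnm i) j → j.val < lam i)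
    (hmu_mem : ∀ i : Fin n, ∃ j : Fin m, j.val = mu i ∧ i.val ≤ j.val ∧ E (Fin.castLE hnm i) j)
    (hmu_min : ∀ (i : Fin n) (j : Fin m), i.val ≤ j.val → E (Fin.castLE hnm i) j → mu i ≤ j.val)
    (hlam_top : lam ⟨0, hn⟩ = m)
    (hlam_anti : Antitone lam)
    (hmu_mono : Monotone mu)
    (hcond : ∀ (i : Fin n) (j : Fin m), mu i ≤ j.val → j.val < lam i → E (Fin.castLE hnm i) j) :
    idealHeight
      (Ideal.span {p : MvPolynomial (Fin m) K |
        ∃ i j : Fin m, E i j ∧ p = X i * X j}) =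
      (min (sInf {h : ℕ | ∃ i : Fin n, h = lam i - mu i + i.val}) n : ℕ) :=
  edge_ideal_height_general hn <| isStaircaseGraph_of_extremal_neighbors hsymm hnm hn_max
    hlam_mem hlam_max hmu_mem hmu_min hlam_anti hmu_mono hcond
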